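/- arXiv:0710.0106 — 3 statements merged into one kernel-verified Lean document; each statement's English description precedes it below -/
import Mathlib

section
/- Let q > 0, p = 1/q, and let f be a function from a fuzzy normed space (X, N) to a fuzzy normed space (Y, N′) satisfying N′ (f(x+y) + f(x−y) − 2f(x) − 2f(y)) (t + s) ≥ min (N x (t^q)) (N y (s^q)) for all x, y ∈ X and s, t ∈ [0, ∞). Then for every integer n ≥ 1, every x ∈ X and every t > 0, N′ (f(2^n x)/4^n − f(x)) t ≥ N x (t^q / (Σ_{k=1}^{n} 2^(k(p−2)+1))^q). -/
/-! At `x = y = 0` the hypothesis and (N2) give `f 0 = 0`, so at `y = x` it bounds `f (2x) - 4 f x`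
at radius `2t` from below by `N x (t ^ q)`. At the point `2 ^ k x`, with `t = 2 ^ ((k + 1) p) u`,
homogeneity and `t ^ q = 2 ^ (k + 1) u ^ q` turn the lower bound into `N x (2 u ^ q)`, the same for
all `k`. After division by `4 ^ (k + 1)` the radius is `2 ^ ((k + 1) (p - 2) + 1) u` and the
differences telescope: the triangle inequality (N4) adds up the radii and keeps the common lower
bound. It remains to choose `u` so that the radii add up to the given `t`. The factor `2` in front
of `u ^ q` is a gain over the claimed estimate. -/

open Filter Finset

/-- A fuzzy norm on a real vector space, following Bag–Samanta. -/
structure IsFuzzyNorm {X : Type*} [AddCommGroup X] [Module ℝ X] (N : X → ℝ → ℝ) : Prop where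
  nonneg : ∀ (x : X) (t : ℝ), 0 ≤ N x t
  le_one : ∀ (x : X) (t : ℝ), N x t ≤ 1
  eq_zero_of_nonpos : ∀ (x : X) (c : ℝ), c ≤ 0 → N x c = 0
  eq_zero_iff : ∀ x : X, x = 0 ↔ ∀ c : ℝ, 0 < c → N x c = 1
  smul_eq : ∀ (c : ℝ) (x : X) (t : ℝ), c ≠ 0 → N (c • x) t = N x (t / |c|)
  min_le_add : ∀ (x y : X) (s t : ℝ), min (N x s) (N y t) ≤ N (x + y) (s + t)
  mono : ∀ x : X, Monotone (N x)
  tendsto_one : ∀ x : X, Tendsto (N x) atTop (nhds 1)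

/-- Convergence of a sequence to a fuzzy limit in a fuzzy normed space. -/
def FuzzyTendsto {X : Type*} [AddCommGroup X] [Module ℝ X] (N : X → ℝ → ℝ)
    (xs : ℕ → X) (x : X) : Prop :=
  ∀ t : ℝ, 0 < t → Tendsto (fun n => N (xs n - x) t) atTop (nhds 1)

/-- Cauchy sequences in a fuzzy normed space. -/
def FuzzyCauchy {X : Type*} [AddCommGroup X] [Module ℝ X] (N : X → ℝ → ℝ)
    (xs : ℕ → X) : Prop :=
  ∀ ε : ℝ, 0 < ε → ∀ t : ℝ, 0 < t → ∃ n₀ : ℕ, ∀ n ≥ n₀, ∀ p : ℕ, 0 < p →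
    1 - ε < N (xs (n + p) - xs n) t

/-- A fuzzy normed space is complete (a fuzzy Banach space) if every Cauchy
sequence converges. -/
def IsFuzzyComplete {X : Type*} [AddCommGroup X] [Module ℝ X] (N : X → ℝ → ℝ) : Prop :=
  ∀ xs : ℕ → X, FuzzyCauchy N xs → ∃ x : X, FuzzyTendsto N xs x

/-- Quadratic functional equation. -/
def IsQuadratic {X Y : Type*} [AddCommGroup X] [AddCommGroup Y] (Q : X → Y) : Prop :=
  ∀ x y : X, Q (x + y) + Q (x - y) = 2 • Q x + 2 • Q y

/-- Additive functional equation. -/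
def IsAdditive {X Y : Type*} [AddCommGroup X] [AddCommGroup Y] (T : X → Y) : Prop :=
  ∀ x y : X, T (x + y) = T x + T y

namespace IsFuzzyNorm

variable {Y : Type*} [AddCommGroup Y] [Module ℝ Y] {N : Y → ℝ → ℝ}

lemma eq_zero_of_forall_one_le (hN : IsFuzzyNorm N) {y : Y} (h : ∀ t, 0 < t → 1 ≤ N y t) :
    y = 0 :=
  (hN.eq_zero_iff y).2 fun t ht => (hN.le_one y t).antisymm (h t ht)

lemma apply_smul_mul (hN : IsFuzzyNorm N) {c : ℝ} (hc : c ≠ 0) (y : Y) (t : ℝ) :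
    N (c • y) (|c| * t) = N y t := by
  rw [hN.smul_eq c y _ hc, mul_div_cancel_left₀ t (abs_ne_zero.2 hc)]

lemma le_apply_sum (hN : IsFuzzyNorm N) {ι : Type*} {s : Finset ι} (hs : s.Nonempty)
    {y : ι → Y} {r : ι → ℝ} {c : ℝ} (h : ∀ i ∈ s, c ≤ N (y i) (r i)) :
    c ≤ N (∑ i ∈ s, y i) (∑ i ∈ s, r i) := by
  induction hs using Finset.Nonempty.cons_induction with
  | singleton i => simpa using h
  | cons i s hi _ ih =>
    rw [forall_mem_cons] at h
    rw [sum_cons, sum_cons]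
    exact (le_min h.1 (ih h.2)).trans (hN.min_le_add _ _ _ _)

lemma le_apply_inv_pow_smul_sub (hN : IsFuzzyNorm N) {b : ℝ} (hb : b ≠ 0) {a : ℕ → Y}
    {r : ℕ → ℝ} {c : ℝ} {n : ℕ} (hn : 1 ≤ n)
    (h : ∀ k < n, c ≤ N (a (k + 1) - b • a k) (|b| ^ (k + 1) * r k)) :
    c ≤ N ((b ^ n)⁻¹ • a n - a 0) (∑ k ∈ range n, r k) := by
  have htelescope : ∑ k ∈ range n, (b ^ (k + 1))⁻¹ • (a (k + 1) - b • a k) =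
      (b ^ n)⁻¹ • a n - a 0 := by
    have hterm (k : ℕ) : (b ^ (k + 1))⁻¹ • (a (k + 1) - b • a k) =
        (b ^ (k + 1))⁻¹ • a (k + 1) - (b ^ k)⁻¹ • a k := by
      rw [smul_sub, smul_smul, pow_succ, mul_inv, inv_mul_cancel_right₀ hb]
    simp only [hterm]
    simpa using sum_range_sub (fun k => (b ^ k)⁻¹ • a k) n
  rw [← htelescope]
  refine hN.le_apply_sum (nonempty_range_iff.2 (Nat.one_le_iff_ne_zero.1 hn)) fun k hk => ?_
  have hbk : b ^ (k + 1) ≠ 0 := pow_ne_zero _ hb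
  rw [← hN.apply_smul_mul hbk, smul_inv_smul₀ hbk, abs_pow]
  exact h k (mem_range.1 hk)

end IsFuzzyNorm

lemma le_apply_pow_nsmul_of_le_apply_nsmul {X M α : Type*} [AddMonoid X] [Monoid M] [Preorder α]
    {φ : X → M → α} {m : ℕ} {r : M} (h : ∀ x t, φ x t ≤ φ (m • x) (r * t))
    (k : ℕ) (x : X) (t : M) : φ x t ≤ φ (m ^ k • x) (r ^ k * t) := by
  induction k with
  | zero => simp
  | succ k ih =>
    rw [pow_succ, mul_nsmul, pow_succ', mul_assoc]
    exact ih.trans (h _ _)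

lemma rpow_natCast_mul_mul_rpow {b p q u : ℝ} (hb : 0 ≤ b) (hpq : p * q = 1) (hu : 0 ≤ u)
    (k : ℕ) : (b ^ (k * p) * u) ^ q = b ^ k * u ^ q := by
  rw [Real.mul_rpow (by positivity) hu, ← Real.rpow_mul hb, mul_assoc, hpq, mul_one,
    Real.rpow_natCast]

lemma self_mul_rpow_natCast_mul {b : ℝ} (hb : 0 < b) (p : ℝ) (k : ℕ) :
    b * b ^ (k * p) = (b ^ 2) ^ k * b ^ (k * (p - 2) + 1) := by
  rw [← pow_mul, ← Real.rpow_natCast, ← Real.rpow_add hb, mul_comm, ← Real.rpow_add_one hb.ne']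
  push_cast
  ring_nf

/-- `f` satisfies the quadratic functional equation up to an error measured by `N'` and controlled
by `φ` with exponent `q`. The control `φ` stands for the fuzzy norm of the domain but is an
arbitrary function, and only positive `s` and `t` occur, so that `0 ^ q` never enters. -/
def IsApproxQuadratic {X Y : Type*} [AddGroup X] [AddCommGroup Y] (φ : X → ℝ → ℝ)
    (N' : Y → ℝ → ℝ) (q : ℝ) (f : X → Y) : Prop :=
  ∀ x y : X, ∀ s t : ℝ, 0 < s → 0 < t →
    min (φ x (t ^ q)) (φ y (s ^ q)) ≤ N' (f (x + y) + f (x - y) - 2 • f x - 2 • f y) (t + s)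

namespace IsApproxQuadratic

variable {X Y : Type*} [AddGroup X] [AddCommGroup Y] {φ : X → ℝ → ℝ} {N' : Y → ℝ → ℝ}
  {q : ℝ} {f : X → Y}

lemma apply_rpow_le (hf : IsApproxQuadratic φ N' q f) (x : X) {t : ℝ} (ht : 0 < t) :
    φ x (t ^ q) ≤ N' (f (2 • x) + f 0 - 4 • f x) (2 * t) := by
  have h := hf x x t t ht ht
  rwa [min_self, ← two_nsmul, sub_self, sub_sub, ← add_nsmul, two_add_two_eq_four,
    ← two_mul] at h

variable [Module ℝ Y]

lemma map_zero (hf : IsApproxQuadratic φ N' q f) (hN' : IsFuzzyNorm N')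
    (hφ : ∀ t, 0 < t → 1 ≤ φ 0 t) : f 0 = 0 := by
  have hzero : f (2 • 0) + f 0 - 4 • f 0 = 0 := hN'.eq_zero_of_forall_one_le fun t ht => by
    have h := hf.apply_rpow_le 0 (half_pos ht)
    rw [mul_div_cancel₀ t two_ne_zero] at h
    exact (hφ _ (Real.rpow_pos_of_pos (half_pos ht) q)).trans h
  have hsmul : f (2 • 0) + f 0 - 4 • f 0 = (-2 : ℝ) • f 0 := by
    rw [nsmul_zero]
    module
  exact (smul_eq_zero.1 (hsmul.symm.trans hzero)).resolve_left (by norm_num)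

lemma apply_two_mul_rpow_le (hf : IsApproxQuadratic φ N' q f) (hN' : IsFuzzyNorm N')
    (hφ_zero : ∀ t, 0 < t → 1 ≤ φ 0 t) (hφ_two : ∀ x t, φ x t ≤ φ (2 • x) (2 * t))
    {p : ℝ} (hpq : p * q = 1) (k : ℕ) (x : X) {u : ℝ} (hu : 0 < u) :
    φ x (2 * u ^ q) ≤ N' (f (2 ^ (k + 1) • x) - (4 : ℝ) • f (2 ^ k • x))
      (4 ^ (k + 1) * (2 ^ (((k + 1 : ℕ) : ℝ) * (p - 2) + 1) * u)) := by
  have htwo_sq : (2 : ℝ) ^ 2 = 4 := by norm_num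
  calc φ x (2 * u ^ q)
      ≤ φ (2 ^ k • x) (2 ^ k * (2 * u ^ q)) := le_apply_pow_nsmul_of_le_apply_nsmul hφ_two k x _
    _ = φ (2 ^ k • x) (((2 : ℝ) ^ (((k + 1 : ℕ) : ℝ) * p) * u) ^ q) := by
        rw [rpow_natCast_mul_mul_rpow zero_le_two hpq hu.le, pow_succ, mul_assoc]
    _ ≤ N' (f (2 • 2 ^ k • x) + f 0 - 4 • f (2 ^ k • x))
          (2 * (2 ^ (((k + 1 : ℕ) : ℝ) * p) * u)) := hf.apply_rpow_le _ (by positivity)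
    _ = _ := by
        rw [hf.map_zero hN' hφ_zero, add_zero, ← mul_nsmul, ← pow_succ, ← mul_assoc,
          self_mul_rpow_natCast_mul two_pos, htwo_sq, mul_assoc, ofNat_smul_eq_nsmul ℝ]

end IsApproxQuadratic

theorem fuzzy_quadratic_approx_general
    {X Y : Type*} [AddGroup X] [AddCommGroup Y] [Module ℝ Y]
    {φ : X → ℝ → ℝ} {N' : Y → ℝ → ℝ} (hN' : IsFuzzyNorm N')
    (hφ_zero : ∀ t, 0 < t → 1 ≤ φ 0 t) (hφ_two : ∀ x t, φ x t ≤ φ (2 • x) (2 * t))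
    {p q : ℝ} (hpq : p * q = 1) {f : X → Y} (hf : IsApproxQuadratic φ N' q f)
    {n : ℕ} (hn : 1 ≤ n) (x : X) {t : ℝ} (ht : 0 < t) :
    φ x (2 * (t ^ q / (∑ k ∈ Icc 1 n, (2 : ℝ) ^ ((k : ℝ) * (p - 2) + 1)) ^ q)) ≤
      N' (((4 : ℝ) ^ n)⁻¹ • f (2 ^ n • x) - f x) t := by
  set S := ∑ k ∈ Icc 1 n, (2 : ℝ) ^ ((k : ℝ) * (p - 2) + 1) with hS
  have hS_pos : 0 < S := sum_pos (fun k _ => by positivity) (nonempty_Icc.2 hn)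
  have hradii : ∑ k ∈ range n, (2 : ℝ) ^ (((k + 1 : ℕ) : ℝ) * (p - 2) + 1) * (t / S) = t := by
    rw [← sum_mul, range_eq_Ico, sum_Ico_add' (fun k : ℕ => (2 : ℝ) ^ ((k : ℝ) * (p - 2) + 1)),
      zero_add, Ico_add_one_right_eq_Icc, ← hS, mul_div_cancel₀ t hS_pos.ne']
  have h := hN'.le_apply_inv_pow_smul_sub four_ne_zero (a := fun k => f (2 ^ k • x)) hn
    fun k _ => by
      simpa only [abs_of_pos (four_pos (α := ℝ))] using
        hf.apply_two_mul_rpow_le hN' hφ_zero hφ_two hpq k x (div_pos ht hS_pos)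
  rwa [hradii, pow_zero, one_nsmul, Real.div_rpow ht.le hS_pos.le] at h

/-- The approximation estimate (2.8) in the proof of Theorem 2.1. -/
theorem fuzzy_quadratic_approx
    {X Y : Type*} [AddCommGroup X] [Module ℝ X] [AddCommGroup Y] [Module ℝ Y]
    (N : X → ℝ → ℝ) (N' : Y → ℝ → ℝ)
    (hN : IsFuzzyNorm N) (hN' : IsFuzzyNorm N')
    (q p : ℝ) (hq : 0 < q) (hp : p = 1 / q)
    (f : X → Y)
    (hf : ∀ x y : X, ∀ s t : ℝ, 0 ≤ s → 0 ≤ t →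
      min (N x (t ^ q)) (N y (s ^ q)) ≤
        N' (f (x + y) + f (x - y) - 2 • f x - 2 • f y) (t + s)) :
    ∀ n : ℕ, 1 ≤ n → ∀ x : X, ∀ t : ℝ, 0 < t →
      N x (t ^ q / (∑ k ∈ Finset.Icc 1 n, (2 : ℝ) ^ ((k : ℝ) * (p - 2) + 1)) ^ q) ≤
        N' (((4 : ℝ) ^ n)⁻¹ • f (((2 : ℝ) ^ n) • x) - f x) t := by
  intro n hn x t ht
  have h := fuzzy_quadratic_approx_general hN' (fun t ht => ((hN.eq_zero_iff 0).1 rfl t ht).ge)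
    (fun x t => by simpa [ofNat_smul_eq_nsmul ℝ] using (hN.apply_smul_mul two_ne_zero x t).ge)
    (hp ▸ one_div_mul_cancel hq.ne') (fun x y s t hs ht => hf x y s t hs.le ht.le) hn x ht
  rw [← Nat.cast_smul_eq_nsmul ℝ, Nat.cast_pow, Nat.cast_ofNat] at h
  exact (hN.mono x (le_mul_of_one_le_left (by positivity) one_le_two)).trans h
end

section
/- Let X be a real linear space, (Y, N) a fuzzy normed space, (Z, N′) a fuzzy normed space, and φ : X × X → Z. Suppose f, g, h : X → Y are odd functions such that N (f(x+y) + f(x−y) − 2g(x) − 2h(y)) t ≥ N′ (φ(x, y)) t for all x, y ∈ X and all t ∈ ℝ. Then for all x ∈ X and t > 0, N (f(x) − g(x) − h(x)) t ≥ min {N′ (φ(x, 0)) t, N′ (φ(0, x)) t}. -/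
/-!
For fixed `t`, a fuzzy norm `N · t` is quasiconcave, so at the midpoint of two vectors it
is at least the minimum of its values at the two. When `f` is odd, the midpoint of the two defects
of the functional equation at `(x, 0)` and at `(0, x)`, where `f x + f (-x)` cancels, is
`f x - g x - h x` up to the constant `g 0 + h 0`, which vanishes for odd `g` and `h`.
-/

open Filter Finset

namespace IsFuzzyNorm

variable {E : Type*} [AddCommGroup E] [Module ℝ E] {N : E → ℝ → ℝ}

theorem apply_smul_abs_mul (hN : IsFuzzyNorm N) {c : ℝ} (hc : c ≠ 0) (x : E) (t : ℝ) :
    N (c • x) (|c| * t) = N x t := by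
  rw [hN.smul_eq c x _ hc, mul_div_cancel_left₀ t (abs_ne_zero.mpr hc)]

theorem quasiconcaveOn (hN : IsFuzzyNorm N) (t : ℝ) :
    QuasiconcaveOn ℝ Set.univ (fun x => N x t) := by
  refine convex_univ.quasiconcaveOn_of_convex_ge fun r => convex_iff_forall_pos.mpr ?_
  intro x (hx : r ≤ N x t) y (hy : r ≤ N y t) a b ha hb hab
  calc
    r ≤ min (N x t) (N y t) := le_min hx hy
    _ = min (N (a • x) (a * t)) (N (b • y) (b * t)) := by
      rw [← hN.apply_smul_abs_mul ha.ne' x t, ← hN.apply_smul_abs_mul hb.ne' y t,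
        abs_of_pos ha, abs_of_pos hb]
    _ ≤ N (a • x + b • y) (a * t + b * t) := hN.min_le_add _ _ _ _
    _ = N (a • x + b • y) t := by rw [← add_mul, hab, one_mul]

theorem min_le_midpoint (hN : IsFuzzyNorm N) (x y : E) (t : ℝ) :
    min (N x t) (N y t) ≤ N (midpoint ℝ x y) t :=
  ((hN.quasiconcaveOn t _).midpoint_mem ⟨trivial, min_le_left _ _⟩ ⟨trivial, min_le_right _ _⟩).2

end IsFuzzyNorm

/-- The defect at `(x, y)` of the pexiderized quadratic functional equation
`f (x + y) + f (x - y) = 2 g x + 2 h y`, whose fuzzy norm the stability hypothesis controls. -/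
def pexiderDefect {G A : Type*} [AddGroup G] [AddCommGroup A] (f g h : G → A) (x y : G) : A :=
  f (x + y) + f (x - y) - 2 • g x - 2 • h y

theorem pexiderDefect_zero_right_add_zero_left {G A : Type*} [AddGroup G] [AddCommGroup A]
    {f : G → A} (hf : f.Odd) (g h : G → A) (x : G) :
    pexiderDefect f g h x 0 + pexiderDefect f g h 0 x =
      2 • (f x - g x - h x - (g 0 + h 0)) := by
  simp only [pexiderDefect, add_zero, sub_zero, zero_add, zero_sub, hf x]
  abel

theorem fuzzy_pexider_odd_diff_general {G E : Type*} [AddGroup G] [AddCommGroup E] [Module ℝ E]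
    {N : E → ℝ → ℝ} (hN : IsFuzzyNorm N) {f : G → E} (hf : f.Odd) (g h : G → E)
    {t : ℝ} {ψ : G → G → ℝ} (hψ : ∀ x y, ψ x y ≤ N (pexiderDefect f g h x y) t) (x : G) :
    min (ψ x 0) (ψ 0 x) ≤ N (f x - g x - h x - (g 0 + h 0)) t := by
  have hmid : midpoint ℝ (pexiderDefect f g h x 0) (pexiderDefect f g h 0 x) =
      f x - g x - h x - (g 0 + h 0) := by
    rw [midpoint_eq_smul_add, pexiderDefect_zero_right_add_zero_left hf, two_nsmul, ← two_smul ℝ,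
      invOf_smul_smul]
  rw [← hmid]
  exact (min_le_min (hψ x 0) (hψ 0 x)).trans (hN.min_le_midpoint _ _ t)

/-- Estimate (3.4) in the proof of Proposition 3.1. -/
theorem fuzzy_pexider_odd_diff
    {X Y Z : Type*} [AddCommGroup X] [Module ℝ X]
    [AddCommGroup Y] [Module ℝ Y] [AddCommGroup Z] [Module ℝ Z]
    (N : Y → ℝ → ℝ) (N' : Z → ℝ → ℝ)
    (hN : IsFuzzyNorm N) (hN' : IsFuzzyNorm N')
    (φ : X × X → Z)
    (f g h : X → Y)
    (hfodd : ∀ x : X, f (-x) = -f x)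
    (hgodd : ∀ x : X, g (-x) = -g x)
    (hhodd : ∀ x : X, h (-x) = -h x)
    (hineq : ∀ x y : X, ∀ t : ℝ,
      N' (φ (x, y)) t ≤ N (f (x + y) + f (x - y) - 2 • g x - 2 • h y) t) :
    ∀ x : X, ∀ t : ℝ, 0 < t →
      min (N' (φ (x, 0)) t) (N' (φ (0, x)) t) ≤ N (f x - g x - h x) t := by
  have : IsAddTorsionFree Y := .of_isTorsionFree ℝ Y
  have hg : g 0 = 0 := Function.Odd.map_zero hgodd
  have hh : h 0 = 0 := Function.Odd.map_zero hhodd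
  intro x t _
  simpa [hg, hh] using
    fuzzy_pexider_odd_diff_general hN hfodd g h (fun x y => hineq x y t) x
end

section
/- Let X be a real linear space, (Y, N) a fuzzy normed space, (Z, N′) a fuzzy normed space, α a real number with 0 < |α| < 2, and φ : X × X → Z with φ(2x, 2y) = α · φ(x, y) for all x, y ∈ X. Suppose f, g, h : X → Y are odd functions such that N (f(x+y) + f(x−y) − 2g(x) − 2h(y)) t ≥ N′ (φ(x, y)) t for all x, y ∈ X and all t ∈ ℝ. Then for all integers n > m ≥ 0, all x ∈ X and all t > 0, N (f(2^n x)/2^n − f(2^m x)/2^m) (Σ_{k=m+1}^{n} (|α|/2)^(k−1) · t) ≥ N″ x t, where N″ x t = min {N′ (φ(x,x)) (t/3), N′ (φ(x,0)) (t/3), N′ (φ(0,x)) (t/3)}. -/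
/-!
Oddness gives `f 0 = 0`, so the expression bounded by `φ` at `(x, x)`, minus those at `(x, 0)` and
`(0, x)`, is `f (2x) - 2 f x`; a third of `t` goes to each. This bounds the failure of `f` to be
`2`-homogeneous by `N''`, which inherits from `φ` the invariance `N'' (2x) (|α| t) = N'' x t`.
Dividing by `2 ^ (k + 1)` at the point `2 ^ k x` bounds the `k`-th increment of the sequence
`f (2 ^ n x) / 2 ^ n`, and the increments add up by the `min` triangle inequality.
-/

open Filter Finset

/-- The control function `N″ x t = min {N′(φ(x,x))(t/3), N′(φ(x,0))(t/3), N′(φ(0,x))(t/3)}`. -/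
noncomputable def Ndd {X Z : Type*} [Zero X] (N' : Z → ℝ → ℝ) (φ : X × X → Z) (x : X) (t : ℝ) : ℝ :=
  min (min (N' (φ (x, x)) (t / 3)) (N' (φ (x, 0)) (t / 3))) (N' (φ (0, x)) (t / 3))

section Ndd

variable {M X Z : Type*} [AddCommGroup Z] [Module ℝ Z] {N' : Z → ℝ → ℝ} {α : ℝ} {φ : X × X → Z}

lemma Ndd_smul [Zero X] [SMulZeroClass M X] (hN' : IsFuzzyNorm N') (hα : α ≠ 0) {r : M}
    (hφ : ∀ x y, φ (r • x, r • y) = α • φ (x, y)) (x : X) (t : ℝ) :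
    Ndd N' φ (r • x) (|α| * t) = Ndd N' φ x t := by
  have hscale (x y : X) : N' (φ (r • x, r • y)) (|α| * t / 3) = N' (φ (x, y)) (t / 3) := by
    rw [hφ, hN'.smul_eq _ _ _ hα, mul_div_assoc, mul_div_cancel_left₀ _ (abs_ne_zero.mpr hα)]
  have hleft := hscale x 0
  have hright := hscale 0 x
  rw [smul_zero] at hleft hright
  simp only [Ndd, hscale, hleft, hright]

end Ndd

lemma apply_pow_smul_pow_mul {M X R B : Type*} [Monoid M] [MulAction M X] [Monoid R]
    {D : X → R → B} {r : M} {a : R} (hD : ∀ x t, D (r • x) (a * t) = D x t)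
    (k : ℕ) (x : X) (t : R) : D (r ^ k • x) (a ^ k * t) = D x t := by
  induction k with
  | zero => simp only [pow_zero, one_smul, one_mul]
  | succ k ih => rw [pow_succ', pow_succ', mul_smul, mul_assoc, hD, ih]

/-- The sequence `n ↦ f (2 ^ n x) / 2 ^ n` of Hyers' direct method, whose limit is the additive map
approximating `f`. Doubling in the domain is iterated addition, so that `X` may be any
abelian group. -/
noncomputable def hyersSeq {X Y : Type*} [AddCommGroup X] [AddCommGroup Y] [Module ℝ Y]
    (f : X → Y) (x : X) (n : ℕ) : Y :=
  ((2 : ℝ) ^ n)⁻¹ • f (2 ^ n • x)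

lemma hyersSeq_eq_real_smul {X Y : Type*} [AddCommGroup X] [Module ℝ X] [AddCommGroup Y]
    [Module ℝ Y] (f : X → Y) (x : X) (n : ℕ) :
    hyersSeq f x n = ((2 : ℝ) ^ n)⁻¹ • f ((2 : ℝ) ^ n • x) := by
  rw [hyersSeq, ← Nat.cast_smul_eq_nsmul ℝ, Nat.cast_pow, Nat.cast_ofNat]

lemma hyersSeq_succ_sub {X Y : Type*} [AddCommGroup X] [AddCommGroup Y] [Module ℝ Y]
    (f : X → Y) (x : X) (n : ℕ) :
    hyersSeq f x (n + 1) - hyersSeq f x n =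
      ((2 : ℝ) ^ (n + 1))⁻¹ • (f (2 • 2 ^ n • x) - 2 • f (2 ^ n • x)) := by
  have hhalf : ((2 : ℝ) ^ (n + 1))⁻¹ * 2 = ((2 : ℝ) ^ n)⁻¹ := by
    rw [pow_succ]
    field_simp
  rw [hyersSeq, hyersSeq, smul_sub, ← mul_nsmul, ← pow_succ, two_nsmul, ← two_smul ℝ (f _),
    smul_smul, hhalf]

lemma sum_Ioc_comp_sub_one {A : Type*} [AddCommMonoid A] (a : ℕ → A) (m n : ℕ) :
    ∑ k ∈ Ioc m n, a (k - 1) = ∑ k ∈ Ico m n, a k := by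
  rw [← Ico_add_one_add_one_eq_Ioc, ← sum_Ico_add' (fun k => a (k - 1))]
  simp only [Nat.add_sub_cancel]

namespace IsFuzzyNorm

variable {X Y Z : Type*} [AddCommGroup X] [AddCommGroup Y] [Module ℝ Y] {N : Y → ℝ → ℝ}

lemma apply_neg (hN : IsFuzzyNorm N) (y : Y) (t : ℝ) : N (-y) t = N y t := by
  simpa using hN.smul_eq (-1) y t (by norm_num)

lemma min_le_sub (hN : IsFuzzyNorm N) (x y : Y) (s t : ℝ) :
    min (N x s) (N y t) ≤ N (x - y) (s + t) := by
  simpa only [hN.apply_neg, ← sub_eq_add_neg] using hN.min_le_add x (-y) s t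

lemma le_sub_of_forall_le_succ_sub (hN : IsFuzzyNorm N) {u : ℕ → Y} {a : ℕ → ℝ} {c : ℝ}
    (hu : ∀ k, c ≤ N (u (k + 1) - u k) (a k)) {m n : ℕ} (hmn : m < n) :
    c ≤ N (u n - u m) (∑ k ∈ Ico m n, a k) := by
  induction n, hmn using Nat.le_induction with
  | base => simpa using hu m
  | succ n hmn ih =>
    calc
      c ≤ min (N (u n - u m) (∑ k ∈ Ico m n, a k)) (N (u (n + 1) - u n) (a n)) :=
        le_min ih (hu n)
      _ ≤ N (u n - u m + (u (n + 1) - u n)) (∑ k ∈ Ico m n, a k + a n) :=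
        hN.min_le_add _ _ _ _
      _ = N (u (n + 1) - u m) (∑ k ∈ Ico m (n + 1), a k) := by
        rw [sub_add_sub_cancel', sum_Ico_succ_top (Nat.le_of_succ_le hmn)]

lemma le_hyersSeq_sub (hN : IsFuzzyNorm N) {D : X → ℝ → ℝ} {a : ℝ} {f : X → Y}
    (hD : ∀ x t, D (2 • x) (a * t) = D x t)
    (hf : ∀ x t, D x t ≤ N (f (2 • x) - 2 • f x) t)
    {m n : ℕ} (hmn : m < n) (x : X) (t : ℝ) :
    D x t ≤ N (hyersSeq f x n - hyersSeq f x m) (∑ k ∈ Ico m n, (a / 2) ^ k * (t / 2)) := by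
  refine hN.le_sub_of_forall_le_succ_sub (fun k => ?_) hmn
  have hpos : (0 : ℝ) < (2 ^ (k + 1))⁻¹ := by positivity
  have hscale : (a / 2) ^ k * (t / 2) / (2 ^ (k + 1))⁻¹ = a ^ k * t := by
    rw [div_pow, pow_succ]
    field_simp
  calc
    D x t = D (2 ^ k • x) (a ^ k * t) := (apply_pow_smul_pow_mul hD k x t).symm
    _ ≤ N (f (2 • 2 ^ k • x) - 2 • f (2 ^ k • x)) (a ^ k * t) := hf _ _
    _ = N (hyersSeq f x (k + 1) - hyersSeq f x k) ((a / 2) ^ k * (t / 2)) := by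
      rw [hyersSeq_succ_sub, hN.smul_eq _ _ _ hpos.ne', abs_of_pos hpos, hscale]

lemma Ndd_le_two_nsmul_sub (hN : IsFuzzyNorm N) {N' : Z → ℝ → ℝ} {φ : X × X → Z} {f g h : X → Y}
    (hf : f.Odd) (hgh : g 0 + h 0 = 0)
    (hineq : ∀ x y t, N' (φ (x, y)) t ≤ N (f (x + y) + f (x - y) - 2 • g x - 2 • h y) t)
    (x : X) (t : ℝ) :
    Ndd N' φ x t ≤ N (f (2 • x) - 2 • f x) t := by
  let E (x y : X) : Y := f (x + y) + f (x - y) - 2 • g x - 2 • h y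
  have hE : E x x - E x 0 - E 0 x = f (2 • x) - 2 • f x := by
    have : IsAddTorsionFree Y := .of_isTorsionFree ℝ Y
    have hf0 : f 0 = 0 := hf.map_zero
    have hh0 : h 0 = -g 0 := eq_neg_of_add_eq_zero_right hgh
    simp only [E, add_zero, zero_add, sub_zero, zero_sub, sub_self, hf0, hh0, hf x, two_nsmul]
    abel
  calc
    Ndd N' φ x t ≤ min (min (N (E x x) (t / 3)) (N (E x 0) (t / 3))) (N (E 0 x) (t / 3)) :=
      min_le_min (min_le_min (hineq _ _ _) (hineq _ _ _)) (hineq _ _ _)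
    _ ≤ min (N (E x x - E x 0) (t / 3 + t / 3)) (N (E 0 x) (t / 3)) :=
      min_le_min_right _ (hN.min_le_sub _ _ _ _)
    _ ≤ N (E x x - E x 0 - E 0 x) (t / 3 + t / 3 + t / 3) := hN.min_le_sub _ _ _ _
    _ = N (f (2 • x) - 2 • f x) t := by rw [hE, add_thirds]

end IsFuzzyNorm

theorem fuzzy_pexider_odd_telescoping_general
    {X Y Z : Type*} [AddCommGroup X] [AddCommGroup Y] [Module ℝ Y] [AddCommGroup Z] [Module ℝ Z]
    {N : Y → ℝ → ℝ} {N' : Z → ℝ → ℝ} (hN : IsFuzzyNorm N) (hN' : IsFuzzyNorm N')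
    {α : ℝ} (hα : α ≠ 0) {φ : X × X → Z} (hφ : ∀ x y, φ (2 • x, 2 • y) = α • φ (x, y))
    {f g h : X → Y} (hf : f.Odd) (hgh : g 0 + h 0 = 0)
    (hineq : ∀ x y t, N' (φ (x, y)) t ≤ N (f (x + y) + f (x - y) - 2 • g x - 2 • h y) t)
    {m n : ℕ} (hmn : m < n) (x : X) (t : ℝ) :
    Ndd N' φ x t ≤
      N (hyersSeq f x n - hyersSeq f x m) (∑ k ∈ Ioc m n, (|α| / 2) ^ (k - 1) * (t / 2)) := by
  rw [sum_Ioc_comp_sub_one fun k => (|α| / 2) ^ k * (t / 2)]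
  exact hN.le_hyersSeq_sub (Ndd_smul hN' hα hφ) (hN.Ndd_le_two_nsmul_sub hf hgh hineq) hmn x t

/-- The telescoping estimate (3.9) in the proof of Proposition 3.1. -/
theorem fuzzy_pexider_odd_telescoping
    {X Y Z : Type*} [AddCommGroup X] [Module ℝ X]
    [AddCommGroup Y] [Module ℝ Y] [AddCommGroup Z] [Module ℝ Z]
    (N : Y → ℝ → ℝ) (N' : Z → ℝ → ℝ)
    (hN : IsFuzzyNorm N) (hN' : IsFuzzyNorm N')
    (α : ℝ) (hα0 : 0 < |α|) (hα2 : |α| < 2)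
    (φ : X × X → Z)
    (hφ : ∀ x y : X, φ (2 • x, 2 • y) = α • φ (x, y))
    (f g h : X → Y)
    (hfodd : ∀ x : X, f (-x) = -f x)
    (hgodd : ∀ x : X, g (-x) = -g x)
    (hhodd : ∀ x : X, h (-x) = -h x)
    (hineq : ∀ x y : X, ∀ t : ℝ,
      N' (φ (x, y)) t ≤ N (f (x + y) + f (x - y) - 2 • g x - 2 • h y) t) :
    ∀ n m : ℕ, m < n → ∀ x : X, ∀ t : ℝ, 0 < t →
      Ndd N' φ x t ≤
        N (((2 : ℝ) ^ n)⁻¹ • f (((2 : ℝ) ^ n) • x) - ((2 : ℝ) ^ m)⁻¹ • f (((2 : ℝ) ^ m) • x))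
          (∑ k ∈ Finset.Ioc m n, (|α| / 2) ^ (k - 1) * t) := by
  intro n m hmn x t ht
  have : IsAddTorsionFree Y := .of_isTorsionFree ℝ Y
  have hgh : g 0 + h 0 = 0 := by
    rw [Function.Odd.map_zero hgodd, Function.Odd.map_zero hhodd, add_zero]
  simp only [← hyersSeq_eq_real_smul]
  refine (fuzzy_pexider_odd_telescoping_general hN hN' (abs_pos.mp hα0) hφ hfodd hgh hineq
    hmn x t).trans (hN.mono _ ?_)
  gcongr
  exact half_le_self ht.le
end
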